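/- Let N ≥ 1, let X be a random variable with values in {0,1,...,N}, let C be a finite set, and let ρ be a probability measure on {0,...,N}^C such that for every c ∈ C the distribution of X is stochastically dominated by the c-marginal of ρ. Let H be any C-valued random variable on the same probability space as X, and define Y : C → {0,...,N} by Y(c) = X · 1[H = c]. Then the distribution of Y is stochastically dominated by ρ. -/

import Mathlib

/-!
Cut `ρ` into pieces, one for each value `(a, c)` of `(X, H)`, the piece of `(a, c)` having mass
`P (X = a, H = c)` and living on `{x | a ≤ x c}`. The pieces are taken greedily, in order of
decreasing `a`. When the turn of `(a, c)` comes, the pieces up to and including it have total mass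
at most `P (a ≤ X)`, which is at most `ρ {x | a ≤ x c}` because the `c`-marginal of `ρ` dominates
the law of `X`; hence enough of `ρ` is left on `{x | a ≤ x c}`. Sending each piece to the
corresponding value of `Y` is a monotone coupling.
-/

open MeasureTheory ProbabilityTheory

/-- `μ` is stochastically dominated by `ν`. -/
def StochDom {E : Type*} [MeasurableSpace E] [Preorder E] (μ ν : Measure E) : Prop :=
  ∃ κ : Measure (E × E), IsProbabilityMeasure κ ∧ κ.map Prod.fst = μ ∧
    κ.map Prod.snd = ν ∧ κ {q | q.1 ≤ q.2} = 1

open Finset Function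

section Greedy

variable {E ι α : Type*} [MeasurableSpace E]

theorem exists_add_eq_of_le_measure (ν : Measure E) [IsFiniteMeasure ν] {A : Set E}
    (hA : MeasurableSet A) {m : ENNReal} (hm : m ≤ ν A) :
    ∃ w ν' : Measure E, w + ν' = ν ∧ w Set.univ = m ∧ w Aᶜ = 0 := by
  refine ⟨(m / ν A) • ν.restrict A, (1 - m / ν A) • ν.restrict A + ν.restrict Aᶜ, ?_, ?_, ?_⟩
  · rw [← add_assoc, ← add_smul, add_tsub_cancel_of_le (ENNReal.div_le_of_le_mul (by simpa)),
      one_smul, Measure.restrict_add_restrict_compl hA]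
  · rw [Measure.smul_apply, Measure.restrict_apply_univ, smul_eq_mul]
    exact ENNReal.div_mul_cancel' (fun h => by simpa [h] using hm)
      (fun h => absurd h (measure_ne_top ν A))
  · simp [Measure.restrict_apply hA.compl]

theorem exists_sum_add_eq_of_rank_sum_le [LinearOrder α] (ρ : Measure E) [IsFiniteMeasure ρ]
    (f : ι → α) (m : ι → ENNReal) {A : ι → Set E} {s : Finset ι}
    (hA : ∀ i ∈ s, MeasurableSet (A i))
    (h : ∀ i ∈ s, ∑ j ∈ s with f i ≤ f j, m j ≤ ρ (A i)) :
    ∃ (w : ι → Measure E) (ν : Measure E), ∑ i ∈ s, w i + ν = ρ ∧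
      ∀ i ∈ s, w i Set.univ = m i ∧ w i (A i)ᶜ = 0 := by
  classical
  induction s using Finset.induction_on_min_value f with
  | empty => exact ⟨0, ρ, by simp, by simp⟩
  | insert a s ha hmin ih =>
    obtain ⟨w, ν, hsum, hw⟩ := ih (fun i hi => hA i (mem_insert_of_mem hi)) fun i hi =>
      (sum_le_sum_of_subset (filter_subset_filter _ (subset_insert a s))).trans
        (h i (mem_insert_of_mem hi))
    have : IsFiniteMeasure ν := isFiniteMeasure_of_le ρ (hsum ▸ Measure.le_add_left le_rfl)
    have hused : (∑ i ∈ s, w i) (A a) ≤ ∑ i ∈ s, m i := by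
      rw [Measure.finsetSum_apply]
      exact sum_le_sum fun i hi => (measure_mono (Set.subset_univ _)).trans_eq (hw i hi).1
    have htotal : m a + ∑ i ∈ s, m i ≤ ρ (A a) := by
      have hall : {j ∈ insert a s | f a ≤ f j} = insert a s :=
        filter_true_of_mem (by simpa using hmin)
      simpa only [hall, sum_insert ha] using h a (mem_insert_self a s)
    have hroom : m a ≤ ν (A a) := by
      have hfin : (∑ i ∈ s, m i) ≠ ⊤ :=
        ne_top_of_le_ne_top (measure_ne_top ρ (A a)) (le_add_self.trans htotal)
      refine (ENNReal.add_le_add_iff_right hfin).1 (htotal.trans ?_)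
      rw [← hsum, Measure.add_apply, add_comm]
      gcongr
    obtain ⟨v, ν', hv, hmass, hsupp⟩ :=
      exists_add_eq_of_le_measure ν (hA a (mem_insert_self a s)) hroom
    have hne : ∀ i ∈ s, i ≠ a := fun i hi => ne_of_mem_of_not_mem hi ha
    refine ⟨update w a v, ν', ?_, ?_⟩
    · rw [sum_insert ha, update_self, sum_congr rfl fun i hi => update_of_ne (hne i hi) v w,
        add_comm v, add_assoc, hv, hsum]
    · rw [forall_mem_insert, update_self]
      refine ⟨⟨hmass, hsupp⟩, fun i hi => ?_⟩
      rw [update_of_ne (hne i hi)]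
      exact hw i hi

end Greedy

section StochDom

variable {E ι α : Type*} [MeasurableSpace E] [Preorder E]

theorem StochDom.measure_le_of_isUpperSet {μ ν : Measure E} (h : StochDom μ ν) {s : Set E}
    (hs : MeasurableSet s) (hup : IsUpperSet s) : μ s ≤ ν s := by
  obtain ⟨κ, _, rfl, rfl, hκ⟩ := h
  rw [Measure.map_apply measurable_fst hs, Measure.map_apply measurable_snd hs]
  -- `{q | q.1 ≤ q.2}` need not be measurable, so its complement need not be null.
  calc κ (Prod.fst ⁻¹' s) = κ ({q | q.1 ≤ q.2} ∩ Prod.fst ⁻¹' s) := by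
        rw [Measure.measure_inter_eq_of_measure_eq (measurable_fst hs)
          (hκ.trans measure_univ.symm) (Set.subset_univ _) (measure_ne_top κ _), Set.univ_inter]
    _ ≤ κ (Prod.snd ⁻¹' s) := measure_mono fun _ hq => hup hq.1 hq.2

theorem stochDom_sum_smul_dirac {s : Finset ι} {e : ι → E} {w : ι → Measure E}
    [IsProbabilityMeasure (∑ i ∈ s, w i)] (hw : ∀ i ∈ s, w i (Set.Ici (e i))ᶜ = 0) :
    StochDom (∑ i ∈ s, w i Set.univ • Measure.dirac (e i)) (∑ i ∈ s, w i) := by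
  set κ : Measure (E × E) := ∑ i ∈ s, (w i).map (Prod.mk (e i))
  have hfst : κ.map Prod.fst = ∑ i ∈ s, w i Set.univ • Measure.dirac (e i) := by
    rw [Measure.map_finset_sum measurable_fst.aemeasurable]
    refine sum_congr rfl fun i _ => ?_
    rw [Measure.map_map measurable_fst measurable_prodMk_left]
    exact Measure.map_const (w i) (e i)
  have hsnd : κ.map Prod.snd = ∑ i ∈ s, w i := by
    rw [Measure.map_finset_sum measurable_snd.aemeasurable]
    refine sum_congr rfl fun i _ => ?_
    rw [Measure.map_map measurable_snd measurable_prodMk_left]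
    exact Measure.map_id
  have hκ : IsProbabilityMeasure κ := by
    have : IsProbabilityMeasure (κ.map Prod.snd) := hsnd ▸ inferInstance
    exact Measure.isProbabilityMeasure_of_map Prod.snd
  refine ⟨κ, hκ, hfst, hsnd, le_antisymm prob_le_one ?_⟩
  calc 1 = ∑ i ∈ s, w i Set.univ := by
        rw [← Measure.finsetSum_apply, measure_univ]
    _ = ∑ i ∈ s, w i (Set.Ici (e i)) :=
        sum_congr rfl fun i hi => (measure_of_measure_compl_eq_zero (hw i hi)).symm
    _ ≤ ∑ i ∈ s, (w i).map (Prod.mk (e i)) {q | q.1 ≤ q.2} :=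
        sum_le_sum fun i _ => Measure.le_map_apply measurable_prodMk_left.aemeasurable _
    _ = κ {q | q.1 ≤ q.2} := (Measure.finsetSum_apply ..).symm

theorem stochDom_sum_smul_dirac_of_rank_sum_le [LinearOrder α] (ρ : Measure E)
    [IsProbabilityMeasure ρ] (f : ι → α) {m : ι → ENNReal} {e : ι → E} {s : Finset ι}
    (he : ∀ i ∈ s, MeasurableSet (Set.Ici (e i))) (hm : ∑ i ∈ s, m i = 1)
    (h : ∀ i ∈ s, ∑ j ∈ s with f i ≤ f j, m j ≤ ρ (Set.Ici (e i))) :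
    StochDom (∑ i ∈ s, m i • Measure.dirac (e i)) ρ := by
  obtain ⟨w, ν, hsum, hw⟩ := exists_sum_add_eq_of_rank_sum_le ρ f m he h
  have hweights : ∑ i ∈ s, m i • Measure.dirac (e i) =
      ∑ i ∈ s, w i Set.univ • Measure.dirac (e i) :=
    sum_congr rfl fun i hi => by rw [(hw i hi).1]
  have hmass : (∑ i ∈ s, w i) Set.univ = 1 := by
    rw [Measure.finsetSum_apply, sum_congr rfl fun i hi => (hw i hi).1, hm]
  have hν : ν = 0 := by
    have huniv : (∑ i ∈ s, w i) Set.univ + ν Set.univ = 1 + 0 := by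
      rw [← Measure.add_apply, hsum, measure_univ, add_zero]
    rw [hmass, ENNReal.add_right_inj ENNReal.one_ne_top] at huniv
    exact Measure.measure_univ_eq_zero.1 huniv
  obtain rfl : ∑ i ∈ s, w i = ρ := by rw [← hsum, hν, add_zero]
  rw [hweights]
  exact stochDom_sum_smul_dirac fun i hi => (hw i hi).2

end StochDom

section SimpleFunc

variable {Ω ι E : Type*} [MeasurableSpace Ω] [MeasurableSpace E]

theorem sum_range_filter_measure_preimage (P : Measure Ω) (Z : SimpleFunc Ω ι) (p : ι → Prop)
    [DecidablePred p] :
    ∑ i ∈ Z.range with p i, P (Z ⁻¹' {i}) = P {ω | p (Z ω)} := by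
  rw [sum_measure_preimage_singleton _ fun i _ => Z.measurableSet_fiber i]
  congr 1
  ext ω
  simp

theorem map_comp_simpleFunc_eq_sum (P : Measure Ω) (Z : SimpleFunc Ω ι) (e : ι → E) :
    P.map (e ∘ Z) = ∑ i ∈ Z.range, P (Z ⁻¹' {i}) • Measure.dirac (e i) := by
  classical
  ext t ht
  have hmeas : Measurable (e ∘ Z) := (Z.map e).measurable
  rw [Measure.map_apply hmeas ht, Measure.finsetSum_apply]
  calc P (e ∘ Z ⁻¹' t) = ∑ i ∈ Z.range with e i ∈ t, P (Z ⁻¹' {i}) :=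
        (sum_range_filter_measure_preimage P Z (e · ∈ t)).symm
    _ = ∑ i ∈ Z.range, (P (Z ⁻¹' {i}) • Measure.dirac (e i)) t := by
        simp [sum_filter, Measure.dirac_apply' _ ht, Set.indicator_apply]

end SimpleFunc

theorem Ici_ite_bot_eq_preimage_eval {C α : Type*} [DecidableEq C] [Preorder α] [OrderBot α]
    (c : C) (a : α) :
    Set.Ici (fun c' => if c = c' then a else ⊥) = (eval c ⁻¹' Set.Ici a : Set (C → α)) := by
  ext x
  refine ⟨fun hx => by simpa using hx c, fun hx c' => ?_⟩
  by_cases hc : c = c'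
  · subst hc
    simpa using hx
  · simp [hc]

theorem stmt1_general {C Ω α : Type*} [DecidableEq C] [LinearOrder α] [OrderBot α]
    [TopologicalSpace α] [ClosedIciTopology α] [MeasurableSpace α] [OpensMeasurableSpace α]
    [MeasurableSpace Ω] (P : Measure Ω) [IsProbabilityMeasure P]
    (X : SimpleFunc Ω α) (H : SimpleFunc Ω C) (ρ : Measure (C → α)) [IsProbabilityMeasure ρ]
    (hdom : ∀ c, StochDom (P.map X) (ρ.map fun x => x c)) :
    StochDom (P.map fun ω c => if H ω = c then X ω else ⊥) ρ := by
  let Z : SimpleFunc Ω (α × C) := X.pair H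
  let e : α × C → C → α := fun i c => if i.2 = c then i.1 else ⊥
  have hIci (i : α × C) : Set.Ici (e i) = eval i.2 ⁻¹' Set.Ici i.1 :=
    Ici_ite_bot_eq_preimage_eval i.2 i.1
  have he (i : α × C) : MeasurableSet (Set.Ici (e i)) :=
    hIci i ▸ measurable_pi_apply i.2 measurableSet_Ici
  have hmass : ∑ i ∈ Z.range, P (Z ⁻¹' {i}) = 1 := by
    simpa using sum_range_filter_measure_preimage P Z fun _ => True
  change StochDom (P.map (e ∘ Z)) ρ
  rw [map_comp_simpleFunc_eq_sum]
  refine stochDom_sum_smul_dirac_of_rank_sum_le ρ Prod.fst (fun i _ => he i) hmass fun i _ => ?_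
  calc ∑ j ∈ Z.range with i.1 ≤ j.1, P (Z ⁻¹' {j}) = P {ω | i.1 ≤ X ω} :=
        sum_range_filter_measure_preimage P Z _
    _ = P.map X (Set.Ici i.1) := (Measure.map_apply X.measurable measurableSet_Ici).symm
    _ ≤ ρ.map (fun x => x i.2) (Set.Ici i.1) :=
        (hdom i.2).measure_le_of_isUpperSet measurableSet_Ici (isUpperSet_Ici _)
    _ = ρ (Set.Ici (e i)) := by
        rw [hIci]
        exact Measure.map_apply (measurable_pi_apply _) measurableSet_Ici

/-- **The one-column lemma.** If the law of `X` is dominated by every marginal of `ρ`,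
and `Y c = X · 1[H = c]`, then the law of `Y` is dominated by `ρ`. -/
theorem stmt1 (N : ℕ) (hN : 1 ≤ N)
    {C : Type*} [Fintype C] [DecidableEq C]
    [MeasurableSpace C] [DiscreteMeasurableSpace C]
    {Ω : Type*} [MeasurableSpace Ω] (P : Measure Ω) [IsProbabilityMeasure P]
    (X : Ω → Fin (N + 1)) (H : Ω → C)
    (hX : Measurable X) (hH : Measurable H)
    (ρ : Measure (C → Fin (N + 1))) [IsProbabilityMeasure ρ]
    (hdom : ∀ c : C, StochDom (P.map X) (ρ.map (fun x => x c))) :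
    StochDom (P.map (fun ω c => if H ω = c then X ω else 0)) ρ :=
  stmt1_general P ⟨X, fun a => hX (measurableSet_singleton a), Set.toFinite _⟩
    ⟨H, fun c => hH (measurableSet_singleton c), Set.toFinite _⟩ ρ hdom
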